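/- arXiv:1709.06120 — 3 statements merged into one kernel-verified Lean document; each statement's English description precedes it below -/
import Mathlib

section
/- Let n ≥ 2, p > 1, r > 1, and real numbers α, β, γ satisfy 1/r − γ/n > 0, 1/p − α/n > 0, 1 − β/n > 0, and γ = (1+α)/r + ((p−1)/(pr))β. Then for every smooth compactly supported function f : ℝ^n → ℝ, ∫_{ℝ^n} |f(x)|^r |x|^{−γ r} dx ≤ (r/(n−γ r)) · (∫_{ℝ^n} |∂_r f(x)|^p |x|^{−α p} dx)^{1/p} · (∫_{ℝ^n} |f(x)|^{p(r−1)/(p−1)} |x|^{−β} dx)^{(p−1)/p}, where ∂_r f(x) = ⟨x/|x|, ∇f(x)⟩ is the radial derivative. -/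
open Real MeasureTheory RealInnerProductSpace

lemma ckn_int_weight {n : ℕ} (hn : 2 ≤ n) {s C R : ℝ} (hs : s < n)
    {h : EuclideanSpace ℝ (Fin n) → ℝ} (hm : Measurable h) (hC : ∀ x, |h x| ≤ C)
    (hR : ∀ x, R ≤ ‖x‖ → h x = 0) :
    Integrable (fun x => h x * ‖x‖ ^ (-s)) := by
  have key : IntegrableOn (fun x => h x * ‖x‖ ^ (-s)) (Metric.ball 0 R) := by
    refine integrableOn_ball_of_norm_le_rpow (C := C) (α := s) ?_ ?_ ?_ ?_
    · simp; omega
    · simpa using hs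
    · refine Filter.Eventually.of_forall fun x => ?_
      rw [norm_mul, Real.norm_eq_abs, Real.norm_of_nonneg (by positivity)]
      gcongr
      exact hC x
    · exact (hm.mul (measurable_norm.pow_const _)).aestronglyMeasurable
  refine (integrableOn_iff_integrable_of_support_subset ?_).1 key
  intro x hx
  rw [mem_ball_zero_iff]
  by_contra hh
  exact hx (by simp [hR x (not_lt.1 hh)])

lemma ckn_abs_aux {r : ℝ} (hr : 1 < r) (y : ℝ) :
    |r * |y| ^ (r - 2) * y| = r * |y| ^ (r - 1) := by
  rw [abs_mul, abs_mul, abs_of_pos (by linarith : 0 < r), abs_of_nonneg (by positivity : 0 ≤ |y| ^ (r-2)),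
    mul_assoc]
  congr 1
  rcases eq_or_ne y 0 with rfl | hy
  · simp [Real.zero_rpow (by linarith : r - 1 ≠ 0)]
  · have : 0 < |y| := abs_pos.2 hy
    nth_rewrite 2 [← Real.rpow_one |y|]
    rw [← Real.rpow_add this]
    congr 1; ring

lemma ckn_ibp {n : ℕ} (hn : 2 ≤ n) {r s : ℝ} (hr : 1 < r) (hs : s < n)
    (f : EuclideanSpace ℝ (Fin n) → ℝ) (hf : ContDiff ℝ (⊤ : ℕ∞) f)
    (hsupp : HasCompactSupport f) :
    (n - s) * ∫ x : EuclideanSpace ℝ (Fin n), |f x| ^ r * ‖x‖ ^ (-s) ≤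
      r * ∫ x : EuclideanSpace ℝ (Fin n), |f x| ^ (r - 1) * |fderiv ℝ f x x| * ‖x‖ ^ (-s) := by
  have hfc : Continuous f := hf.continuous
  have hdc : Continuous (fderiv ℝ f) := hf.continuous_fderiv (by simp)
  have hfd : Differentiable ℝ f := hf.differentiable (by simp)
  obtain ⟨M, hM⟩ := hsupp.exists_bound_of_continuous hfc
  obtain ⟨K, hK⟩ := (hsupp.fderiv (𝕜 := ℝ)).exists_bound_of_continuous hdc
  obtain ⟨R, hR0, hR⟩ := hsupp.isCompact.isBounded.exists_pos_norm_lt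
  have hRf : ∀ x, R ≤ ‖x‖ → f x = 0 := fun x hx => by
    by_contra h
    exact absurd (hR x (subset_tsupport _ h)) (not_lt.2 hx)
  have hM0 : 0 ≤ M := (norm_nonneg _).trans (hM 0)
  have hK0 : 0 ≤ K := (norm_nonneg _).trans (hK 0)
  have hfr : Continuous fun x => |f x| ^ r :=
    hfc.abs.rpow_const fun _ => Or.inr (by linarith)
  set C : ℝ := r * M ^ (r-1) * (K * (2 * R)) with hC
  have hC0 : 0 ≤ C := by positivity
  set φ : ℝ := ∫ x : EuclideanSpace ℝ (Fin n), |f x| ^ r * ‖x‖ ^ (-s) with hφ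
  let F : ℝ → EuclideanSpace ℝ (Fin n) → ℝ := fun t x => |f (t • x)| ^ r * ‖x‖ ^ (-s)
  let F' : ℝ → EuclideanSpace ℝ (Fin n) → ℝ := fun t x =>
    (r * |f (t • x)| ^ (r-2) * f (t • x) * fderiv ℝ f (t • x) x) * ‖x‖ ^ (-s)
  let b : EuclideanSpace ℝ (Fin n) → ℝ := fun x =>
    (Metric.ball (0 : EuclideanSpace ℝ (Fin n)) (2*R)).indicator (fun _ => C) x * ‖x‖ ^ (-s)
  have hmain := hasDerivAt_integral_of_dominated_loc_of_deriv_le (μ := volume) (F := F) (F' := F')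
    (x₀ := (1:ℝ)) (s := Metric.ball 1 (1/2)) (bound := b) (Metric.ball_mem_nhds _ (by norm_num))
    ?_ ?_ ?_ ?_ ?_ ?_
  rotate_left
  · refine Filter.Eventually.of_forall fun t => ?_
    have h1 : Measurable fun x : EuclideanSpace ℝ (Fin n) => |f (t • x)| ^ r :=
      (hfr.comp (continuous_const_smul t)).measurable
    exact (h1.mul (measurable_norm.pow_const _)).aestronglyMeasurable
  · have : Integrable (fun x => |f x| ^ r * ‖x‖ ^ (-s)) := by
      refine ckn_int_weight hn hs (C := M ^ r) (R := R) hfr.measurable ?_ ?_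
      · intro x
        rw [abs_of_nonneg (by positivity)]
        have := hM x
        rw [Real.norm_eq_abs] at this
        gcongr
      · intro x hx
        simp [hRf x hx, Real.zero_rpow (by linarith : r ≠ 0)]
    simpa [F] using this
  · have h1 : Measurable fun x : EuclideanSpace ℝ (Fin n) => fderiv ℝ f ((1:ℝ) • x) x :=
      ((hdc.comp (continuous_const_smul (1:ℝ))).clm_apply continuous_id).measurable
    have h2 : Measurable fun x : EuclideanSpace ℝ (Fin n) => f ((1:ℝ) • x) :=
      (hfc.comp (continuous_const_smul (1:ℝ))).measurable
    have h3 : Measurable fun x : EuclideanSpace ℝ (Fin n) => |f ((1:ℝ) • x)| :=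
      (hfc.comp (continuous_const_smul (1:ℝ))).abs.measurable
    exact (((((h3.pow_const (r-2)).const_mul r).mul h2).mul h1).mul
      (measurable_norm.pow_const _)).aestronglyMeasurable
  · refine Filter.Eventually.of_forall fun x t ht => ?_
    have ht' : 1/2 < t := by
      rw [Metric.mem_ball, Real.dist_eq, abs_lt] at ht; linarith [ht.1]
    simp only [F', b]
    rw [norm_mul, Real.norm_of_nonneg (by positivity : 0 ≤ ‖x‖ ^ (-s))]
    gcongr
    by_cases hx : ‖x‖ < 2 * R
    · rw [Set.indicator_of_mem (by simpa using hx), norm_mul, Real.norm_eq_abs, ckn_abs_aux hr, hC]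
      have h1 := hM (t • x)
      rw [Real.norm_eq_abs] at h1
      have h2 : ‖fderiv ℝ f (t • x) x‖ ≤ K * (2 * R) := by
        refine (ContinuousLinearMap.le_opNorm _ _).trans ?_
        gcongr
        exact hK _
      have hr1 : 0 ≤ r - 1 := by linarith
      gcongr
    · rw [hRf (t • x)]
      · rw [Set.indicator_of_notMem (by simpa using hx)]; simp
      · rw [norm_smul, Real.norm_of_nonneg (by linarith)]
        nlinarith [not_lt.1 hx]
  · refine ckn_int_weight hn hs (C := C) (R := 2 * R) ?_ ?_ ?_
    · exact measurable_const.indicator measurableSet_ball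
    · intro x
      classical
      rw [Set.indicator_apply]
      split_ifs
      · rw [abs_of_nonneg hC0]
      · simpa using hC0
    · intro x hx
      exact Set.indicator_of_notMem (by simpa using hx) _
  · refine Filter.Eventually.of_forall fun x t ht => ?_
    have h1 : HasDerivAt (fun t : ℝ => t • x) x t := by
      simpa using (hasDerivAt_id t).smul_const x
    have h2 : HasDerivAt (fun t : ℝ => f (t • x)) (fderiv ℝ f (t • x) x) t :=
      (hfd (t • x)).hasFDerivAt.comp_hasDerivAt t h1
    exact ((hasDerivAt_abs_rpow (f (t • x)) hr).comp t h2).mul_const _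
  obtain ⟨-, hder⟩ := hmain
  have hscale : ∀ t : ℝ, 0 < t → ∫ x, F t x = t ^ (s - n) * φ := by
    intro t ht
    have := Measure.integral_comp_smul_of_nonneg (volume : Measure (EuclideanSpace ℝ (Fin n)))
      (fun x => |f x| ^ r * ‖x‖ ^ (-s)) t (hR := ht.le)
    rw [finrank_euclideanSpace_fin] at this
    have h2 : ∀ x, F t x = t ^ s * (|f (t • x)| ^ r * ‖t • x‖ ^ (-s)) := by
      intro x
      simp only [F]
      rw [norm_smul, Real.norm_of_nonneg ht.le, Real.mul_rpow ht.le (norm_nonneg _),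
        Real.rpow_neg ht.le]
      have : t ^ s ≠ 0 := (Real.rpow_pos_of_pos ht s).ne'
      field_simp
    simp_rw [h2]
    rw [integral_const_mul, this, Real.rpow_sub ht, Real.rpow_natCast, smul_eq_mul, ← hφ]
    ring
  have hder2 : HasDerivAt (fun t : ℝ => ∫ x, F t x) ((s - n) * φ) 1 := by
    have h3 : HasDerivAt (fun t : ℝ => t ^ (s - n) * φ) ((s - n) * φ) 1 := by
      have := (Real.hasDerivAt_rpow_const (x := 1) (p := s - n) (Or.inl one_ne_zero)).mul_const φ
      simpa using this
    refine h3.congr_of_eventuallyEq ?_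
    filter_upwards [lt_mem_nhds (zero_lt_one' ℝ)] with t ht using hscale t ht
  have heq := hder.unique hder2
  have : (n - s) * φ ≤ ‖∫ x, F' 1 x‖ := by
    rw [heq, Real.norm_eq_abs]
    refine le_trans (le_of_eq ?_) (neg_le_abs _)
    ring
  refine this.trans ((norm_integral_le_integral_norm _).trans (le_of_eq ?_))
  rw [← integral_const_mul]
  congr 1
  ext x
  simp only [F', one_smul]
  rw [norm_mul, norm_mul, Real.norm_of_nonneg (by positivity : 0 ≤ ‖x‖ ^ (-s)), Real.norm_eq_abs,
    ckn_abs_aux hr, Real.norm_eq_abs]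
  ring

/-- Sharp CKN inequality on ℝⁿ with the radial derivative `∂_r f(x) = ⟨x/|x|, ∇f(x)⟩`. -/
theorem ckn_radial
    (n : ℕ) (hn : 2 ≤ n) (p r α β γ : ℝ) (hp : 1 < p) (hr : 1 < r)
    (h1 : 0 < 1/r - γ/n) (h2 : 0 < 1/p - α/n) (h3 : 0 < 1 - β/n)
    (hbal : γ = (1+α)/r + ((p-1)/(p*r)) * β)
    (f : EuclideanSpace ℝ (Fin n) → ℝ) (hf : ContDiff ℝ (⊤ : ℕ∞) f)
    (hsupp : HasCompactSupport f) :
    ∫ x : EuclideanSpace ℝ (Fin n), |f x| ^ r * ‖x‖ ^ (-(γ * r)) ≤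
      (r / (n - γ * r)) *
        (∫ x : EuclideanSpace ℝ (Fin n),
            |⟪‖x‖⁻¹ • x, gradient f x⟫| ^ p * ‖x‖ ^ (-(α * p))) ^ (1/p) *
        (∫ x : EuclideanSpace ℝ (Fin n),
            |f x| ^ (p * (r-1) / (p-1)) * ‖x‖ ^ (-β)) ^ ((p-1)/p) := by
  have hn0 : (0:ℝ) < n := by exact_mod_cast (by omega : 0 < n)
  have hp0 : 0 < p := by linarith
  have hr0 : 0 < r := by linarith
  have hp1 : 0 < p - 1 := by linarith
  have hγ : γ * r < n := by
    have : γ / n < 1 / r := by linarith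
    rw [div_lt_div_iff₀ hn0 hr0] at this
    linarith
  have hα : α * p < n := by
    have : α / n < 1 / p := by linarith
    rw [div_lt_div_iff₀ hn0 hp0] at this
    linarith
  have hβ : β < n := by
    have : β / n < 1 := by linarith
    rwa [div_lt_one hn0] at this
  have hbal' : γ * r = 1 + α + β * ((p-1)/p) := by
    rw [hbal]; field_simp
  have : Nonempty (Fin n) := ⟨⟨0, by omega⟩⟩
  have hfc : Continuous f := hf.continuous
  have hdc : Continuous (fderiv ℝ f) := hf.continuous_fderiv (by simp)
  obtain ⟨M, hM⟩ := hsupp.exists_bound_of_continuous hfc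
  obtain ⟨K, hK⟩ := (hsupp.fderiv (𝕜 := ℝ)).exists_bound_of_continuous hdc
  obtain ⟨R, hR0, hR⟩ := hsupp.isCompact.isBounded.exists_pos_norm_lt
  have hRf : ∀ x, R ≤ ‖x‖ → f x = 0 := fun x hx => by
    by_contra h
    exact absurd (hR x (subset_tsupport _ h)) (not_lt.2 hx)
  have hRd : ∀ x, R ≤ ‖x‖ → fderiv ℝ f x = 0 := fun x hx => by
    by_contra h
    exact absurd (hR x (support_fderiv_subset ℝ h)) (not_lt.2 hx)
  have hM0 : 0 ≤ M := (norm_nonneg _).trans (hM 0)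
  have hK0 : 0 ≤ K := (norm_nonneg _).trans (hK 0)
  have hgrad : ∀ x, ⟪‖x‖⁻¹ • x, gradient f x⟫ = ‖x‖⁻¹ * fderiv ℝ f x x := by
    intro x
    rw [real_inner_smul_left, real_inner_comm, ← toDual_gradient (𝕜 := ℝ) (f := f),
      InnerProductSpace.toDual_apply_apply]
  simp_rw [hgrad]
  set d : EuclideanSpace ℝ (Fin n) → ℝ := fun x => |‖x‖⁻¹ * fderiv ℝ f x x| with hd
  have hdm : Measurable d := by
    have h1 : Measurable fun x : EuclideanSpace ℝ (Fin n) => fderiv ℝ f x x :=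
      (hdc.clm_apply continuous_id).measurable
    exact (measurable_norm.inv.mul h1).abs
  have hdK : ∀ x, d x ≤ K := by
    intro x
    simp only [hd]
    rw [abs_mul, abs_inv, abs_norm]
    rcases eq_or_ne x 0 with rfl | hx
    · simpa using hK0
    · have hx' : 0 < ‖x‖ := norm_pos_iff.2 hx
      rw [inv_mul_le_iff₀ hx', mul_comm]
      refine ((fderiv ℝ f x).le_opNorm x).trans ?_
      gcongr
      exact hK x
  have hd0 : ∀ x, 0 ≤ d x := fun x => abs_nonneg _
  have hconj : p.HolderConjugate (p / (p-1)) := Real.HolderConjugate.conjExponent hp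
  set q := p / (p-1) with hq
  have hq0 : 0 < q := div_pos hp0 hp1
  let u : EuclideanSpace ℝ (Fin n) → ℝ := fun x => d x * ‖x‖ ^ (-α)
  let v : EuclideanSpace ℝ (Fin n) → ℝ := fun x => |f x| ^ (r-1) * ‖x‖ ^ (-(β * ((p-1)/p)))
  have hu0 : ∀ x, 0 ≤ u x := fun x => mul_nonneg (hd0 x) (by positivity)
  have hv0 : ∀ x, 0 ≤ v x := fun x => by simp only [v]; positivity
  have hup : ∀ x, u x ^ p = d x ^ p * ‖x‖ ^ (-(α * p)) := by
    intro x
    simp only [u]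
    rw [Real.mul_rpow (hd0 x) (by positivity), ← Real.rpow_mul (norm_nonneg _)]
    congr 2; ring
  have hvq : ∀ x, v x ^ q = |f x| ^ (p * (r-1) / (p-1)) * ‖x‖ ^ (-β) := by
    intro x
    simp only [v]
    rw [Real.mul_rpow (by positivity) (by positivity), ← Real.rpow_mul (norm_nonneg _),
      ← Real.rpow_mul (abs_nonneg _)]
    congr 2
    · rw [hq]; ring
    · rw [hq]; field_simp
  have hum : Measurable u := hdm.mul (measurable_norm.pow_const _)
  have hvm : Measurable v := (hfc.abs.measurable.pow_const _).mul (measurable_norm.pow_const _)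
  have huL : MemLp u (ENNReal.ofReal p) volume := by
    rw [← integrable_norm_rpow_iff hum.aestronglyMeasurable (by simpa using hp0) (by simp),
      ENNReal.toReal_ofReal hp0.le]
    simp_rw [fun x => Real.norm_of_nonneg (hu0 x), hup]
    refine ckn_int_weight hn hα (C := K ^ p) (R := R) (hdm.pow_const _) ?_ ?_
    · intro x
      rw [abs_of_nonneg (Real.rpow_nonneg (hd0 x) _)]
      exact Real.rpow_le_rpow (hd0 x) (hdK x) hp0.le
    · intro x hx
      simp [hd, hRd x hx, Real.zero_rpow hp0.ne']
  have hvL : MemLp v (ENNReal.ofReal q) volume := by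
    rw [← integrable_norm_rpow_iff hvm.aestronglyMeasurable (by simpa using hq0) (by simp),
      ENNReal.toReal_ofReal hq0.le]
    simp_rw [fun x => Real.norm_of_nonneg (hv0 x), hvq]
    have he : 0 < p * (r-1) / (p-1) := div_pos (mul_pos hp0 (by linarith)) hp1
    refine ckn_int_weight hn hβ (C := M ^ (p * (r-1) / (p-1))) (R := R)
      (hfc.abs.measurable.pow_const _) ?_ ?_
    · intro x
      rw [abs_of_nonneg (by positivity)]
      exact Real.rpow_le_rpow (abs_nonneg _) (hM x) he.le
    · intro x hx
      rw [hRf x hx, abs_zero, Real.zero_rpow he.ne']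
  have hH := integral_mul_le_Lp_mul_Lq_of_nonneg hconj (Filter.Eventually.of_forall hu0)
    (Filter.Eventually.of_forall hv0) huL hvL
  simp_rw [hup, hvq] at hH
  have hq1 : 1 / q = (p-1)/p := by rw [hq, one_div_div]
  rw [hq1] at hH
  have hI := ckn_ibp hn hr hγ f hf hsupp
  have huv : ∫ x : EuclideanSpace ℝ (Fin n),
      |f x| ^ (r - 1) * |fderiv ℝ f x x| * ‖x‖ ^ (-(γ * r)) = ∫ x, u x * v x := by
    refine integral_congr_ae ?_
    have : ∀ᵐ x : EuclideanSpace ℝ (Fin n), x ≠ 0 := by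
      simp [ae_iff]
    filter_upwards [this] with x hx
    have hx' : 0 < ‖x‖ := norm_pos_iff.2 hx
    simp only [u, v, hd]
    have e : ‖x‖ ^ (-(γ * r)) = ‖x‖⁻¹ * (‖x‖ ^ (-α) * ‖x‖ ^ (-(β * ((p-1)/p)))) := by
      rw [← Real.rpow_neg_one, ← Real.rpow_add hx', ← Real.rpow_add hx', hbal']
      congr 1; ring
    rw [e, abs_mul, abs_inv, abs_norm]
    ring
  rw [huv] at hI
  have hpos : 0 < n - γ * r := by linarith
  rw [mul_assoc, div_mul_eq_mul_div, le_div_iff₀ hpos, mul_comm]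
  exact hI.trans (mul_le_mul_of_nonneg_left hH hr0.le)
end

section
/- Let n ≥ 2, p > 1, r > p, and α, β, γ satisfy 1/r − γ/n > 0, 1/p − α/n > 0, 1 − β/n > 0, γ = (1+α)/r + ((p−1)/(pr))β, and n − β < (1 + α − β/p)·p(r−1)/(r−p). Then for λ > 0 the function f(x) = (λ + |x|^{1+α−β/p})^{(p−1)/(p−r)} attains equality in the CKN inequality: ∫_{ℝ^n} |f|^r |x|^{−γr} dx = (r/(n−γr)) (∫_{ℝ^n} |∇f|^p |x|^{−αp} dx)^{1/p} (∫_{ℝ^n} |f|^{p(r−1)/(p−1)} |x|^{−β} dx)^{(p−1)/p}, and all three integrals are finite. -/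
open Real MeasureTheory

lemma ckn_aux_int (lam s m a : ℝ) (hlam : 0 < lam) (hs : 0 < s) (hm : 0 < m) (ha : 0 < a)
    (ham : a < s * m) :
    IntegrableOn (fun y : ℝ => y ^ (a - 1) * (lam + y ^ s) ^ (-m)) (Set.Ioi 0) := by
  have hmeas : Measurable (fun y : ℝ => y ^ (a - 1) * (lam + y ^ s) ^ (-m)) := by fun_prop
  rw [← Set.Ioc_union_Ioi_eq_Ioi (zero_le_one (α := ℝ))]
  refine IntegrableOn.union ?_ ?_
  · have h : IntegrableOn (fun y : ℝ => lam ^ (-m) * y ^ (a - 1)) (Set.Ioc 0 1) := by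
      have := (intervalIntegral.intervalIntegrable_rpow' (a := 0) (b := 1) (r := a - 1)
        (by linarith)).const_mul (lam ^ (-m))
      rwa [intervalIntegrable_iff_integrableOn_Ioc_of_le zero_le_one] at this
    refine Integrable.mono' h hmeas.aestronglyMeasurable ?_
    refine (ae_restrict_iff' measurableSet_Ioc).2 (Filter.Eventually.of_forall fun y hy => ?_)
    have hy0 : 0 < y := hy.1
    have h1 : 0 < y ^ s := rpow_pos_of_pos hy0 _
    rw [Real.norm_of_nonneg (by positivity), mul_comm]
    gcongr ?_ * _
    exact rpow_le_rpow_of_nonpos hlam (by linarith) (by linarith)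
  · have h : IntegrableOn (fun y : ℝ => y ^ (a - 1 - s * m)) (Set.Ioi 1) :=
      integrableOn_Ioi_rpow_of_lt (by linarith) one_pos
    refine Integrable.mono' h hmeas.aestronglyMeasurable ?_
    refine (ae_restrict_iff' measurableSet_Ioi).2 (Filter.Eventually.of_forall fun y hy => ?_)
    have hy0 : 0 < y := lt_trans one_pos hy
    have h1 : 0 < y ^ s := rpow_pos_of_pos hy0 _
    rw [Real.norm_of_nonneg (by positivity)]
    have : y ^ (a - 1 - s * m) = y ^ (a - 1) * (y ^ s) ^ (-m) := by
      rw [← rpow_mul hy0.le, ← rpow_add hy0]; congr 1; ring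
    rw [this]
    gcongr _ * ?_
    exact rpow_le_rpow_of_nonpos h1 (by linarith) (by linarith)

lemma ckn_aux_ibp (lam s m a : ℝ) (hlam : 0 < lam) (hs : 0 < s) (hm : 0 < m) (ha : 0 < a)
    (ham : a < s * m) :
    a * ∫ y in Set.Ioi (0:ℝ), y ^ (a - 1) * (lam + y ^ s) ^ (-m) =
      m * s * ∫ y in Set.Ioi (0:ℝ), y ^ (a + s - 1) * (lam + y ^ s) ^ (-(m + 1)) := by
  have i1 := (ckn_aux_int lam s m a hlam hs hm ha ham).const_mul a
  have i2 := (ckn_aux_int lam s (m + 1) (a + s) hlam hs (by linarith) (by linarith)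
    (by nlinarith)).const_mul (m * s)
  have key := integral_Ioi_of_hasDerivAt_of_tendsto (a := (0:ℝ)) (m := (0:ℝ))
    (f := fun y : ℝ => y ^ a * (lam + y ^ s) ^ (-m))
    (f' := fun y : ℝ => a * (y ^ (a - 1) * (lam + y ^ s) ^ (-m))
      - m * s * (y ^ (a + s - 1) * (lam + y ^ s) ^ (-(m + 1)))) ?_ ?_ (i1.sub i2) ?_
  · rw [integral_sub i1 i2, integral_const_mul, integral_const_mul, zero_rpow ha.ne'] at key
    linarith
  · apply ContinuousAt.continuousWithinAt
    refine ContinuousAt.mul (continuousAt_rpow_const _ _ (Or.inr ha.le)) ?_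
    refine ContinuousAt.rpow_const ?_ (Or.inl ?_)
    · exact continuousAt_const.add (continuousAt_rpow_const _ _ (Or.inr hs.le))
    · rw [zero_rpow hs.ne']; simpa using hlam.ne'
  · intro y hy
    have hy0 : 0 < y := hy
    have h1 : 0 < y ^ s := rpow_pos_of_pos hy0 _
    have d1 := Real.hasDerivAt_rpow_const (x := y) (p := a) (Or.inl hy0.ne')
    have d2 := ((Real.hasDerivAt_rpow_const (x := y) (p := s) (Or.inl hy0.ne')).const_add
      lam).rpow_const (p := -m) (Or.inl (by positivity))
    refine (d1.mul d2).congr_deriv ?_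
    have e1 : y ^ (a + s - 1) = y ^ a * y ^ (s - 1) := by
      rw [← rpow_add hy0]; congr 1; ring
    have e2 : -(m + 1) = -m - 1 := by ring
    rw [e1, e2]; ring
  · have ht : Filter.Tendsto (fun y : ℝ => y ^ (-(s * m - a))) Filter.atTop (nhds 0) :=
      tendsto_rpow_neg_atTop (by linarith)
    refine tendsto_of_tendsto_of_tendsto_of_le_of_le' tendsto_const_nhds ht ?_ ?_
    · filter_upwards [Filter.eventually_gt_atTop 0] with y hy0
      have h1 : 0 < y ^ s := rpow_pos_of_pos hy0 _
      positivity
    · filter_upwards [Filter.eventually_gt_atTop 0] with y hy0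
      have h1 : 0 < y ^ s := rpow_pos_of_pos hy0 _
      have : y ^ (-(s * m - a)) = y ^ a * (y ^ s) ^ (-m) := by
        rw [← rpow_mul hy0.le, ← rpow_add hy0]; congr 1; ring
      rw [this]
      gcongr _ * ?_
      exact rpow_le_rpow_of_nonpos h1 (by linarith) (by linarith)

lemma ckn_aux_grad (n : ℕ) (hn : 2 ≤ n) (lam s k : ℝ) (hlam : 0 < lam) (hs : 0 < s) (hk : 0 < k)
    (x : EuclideanSpace ℝ (Fin n)) (hx : x ≠ 0) :
    ‖gradient (fun x : EuclideanSpace ℝ (Fin n) => (lam + ‖x‖ ^ s) ^ (-k)) x‖ =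
      k * s * ‖x‖ ^ (s - 1) * (lam + ‖x‖ ^ s) ^ (-(k + 1)) := by
  have hy0 : 0 < ‖x‖ := norm_pos_iff.2 hx
  have h1 : 0 < ‖x‖ ^ s := rpow_pos_of_pos hy0 _
  have : Nontrivial (EuclideanSpace ℝ (Fin n)) := ⟨x, 0, hx⟩
  have dn : DifferentiableAt ℝ (fun x : EuclideanSpace ℝ (Fin n) => ‖x‖) x :=
    (contDiffAt_norm ℝ hx (n := 1)).differentiableAt (by simp)
  have d2 := ((Real.hasDerivAt_rpow_const (x := ‖x‖) (p := s) (Or.inl hy0.ne')).const_add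
      lam).rpow_const (p := -k) (Or.inl (by positivity))
  have d3 := HasDerivAt.comp_hasFDerivAt x d2 dn.hasFDerivAt
  have d4 := d3.fderiv
  unfold gradient
  rw [LinearIsometryEquiv.norm_map]
  change ‖fderiv ℝ ((fun y : ℝ => (lam + y ^ s) ^ (-k)) ∘ fun x => ‖x‖) x‖ = _
  rw [d4, norm_smul, norm_fderiv_norm dn]
  have e2 : -(k + 1) = -k - 1 := by ring
  rw [e2, show s * ‖x‖ ^ (s - 1) * -k * (lam + ‖x‖ ^ s) ^ (-k - 1) =
    -(k * s * ‖x‖ ^ (s - 1) * (lam + ‖x‖ ^ s) ^ (-k - 1)) by ring, norm_neg,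
    Real.norm_of_nonneg (by positivity), mul_one]

lemma ckn_aux_radial (n : ℕ) (hn : 2 ≤ n) (lam s m b : ℝ) :
    Set.EqOn (fun y : ℝ => y ^ (Module.finrank ℝ (EuclideanSpace ℝ (Fin n)) - 1) •
        ((lam + y ^ s) ^ (-m) * y ^ (-b)))
      (fun y : ℝ => y ^ (((n : ℝ) - b) - 1) * (lam + y ^ s) ^ (-m)) (Set.Ioi 0) := by
  intro y hy
  have hy0 : 0 < y := hy
  have : y ^ (((n : ℝ) - b) - 1) = y ^ (n - 1) * y ^ (-b) := by
    rw [← rpow_natCast, ← rpow_add hy0, Nat.cast_sub (by omega)]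
    congr 1; push_cast; ring
  simp only [finrank_euclideanSpace, Fintype.card_fin, smul_eq_mul]
  rw [this]; ring


/-- The functions `f(x) = (λ + |x|^{1+α−β/p})^{(p−1)/(p−r)}` are extremal for the CKN
inequality in the regime `r > p`, and all three weighted integrals are finite. -/
theorem ckn_extremal_r_gt_p
    (n : ℕ) (hn : 2 ≤ n) (p r α β γ : ℝ) (hp : 1 < p) (hr : p < r)
    (h1 : 0 < 1/r - γ/n) (h2 : 0 < 1/p - α/n) (h3 : 0 < 1 - β/n)
    (hbal : γ = (1+α)/r + ((p-1)/(p*r)) * β)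
    (hcond : (n : ℝ) - β < (1 + α - β/p) * p * (r-1) / (r-p))
    (lam : ℝ) (hlam : 0 < lam)
    (f : EuclideanSpace ℝ (Fin n) → ℝ)
    (hf : f = fun x => (lam + ‖x‖ ^ (1 + α - β/p)) ^ ((p-1)/(p-r))) :
    (∫ x : EuclideanSpace ℝ (Fin n), |f x| ^ r * ‖x‖ ^ (-(γ * r)) =
      (r / (n - γ * r)) *
        (∫ x : EuclideanSpace ℝ (Fin n), ‖gradient f x‖ ^ p * ‖x‖ ^ (-(α * p))) ^ (1/p) *
        (∫ x : EuclideanSpace ℝ (Fin n),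
            |f x| ^ (p * (r-1)/(p-1)) * ‖x‖ ^ (-β)) ^ ((p-1)/p)) ∧
    Integrable (fun x : EuclideanSpace ℝ (Fin n) => |f x| ^ r * ‖x‖ ^ (-(γ * r))) ∧
    Integrable (fun x : EuclideanSpace ℝ (Fin n) => ‖gradient f x‖ ^ p * ‖x‖ ^ (-(α * p))) ∧
    Integrable (fun x : EuclideanSpace ℝ (Fin n) =>
      |f x| ^ (p * (r-1)/(p-1)) * ‖x‖ ^ (-β)) := by
  have hn0 : (0:ℝ) < n := by positivity
  have hp0 : 0 < p := by linarith
  have hr0 : 0 < r := by linarith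
  have hrp : 0 < r - p := by linarith
  have hnb : 0 < (n:ℝ) - β := by
    have := (div_lt_one hn0).1 (by linarith : β / n < 1)
    linarith
  obtain ⟨s, hs⟩ : ∃ s, s = 1 + α - β / p := ⟨_, rfl⟩
  obtain ⟨k, hk⟩ : ∃ k, k = (p - 1) / (r - p) := ⟨_, rfl⟩
  have hk0 : 0 < k := by rw [hk]; exact div_pos (by linarith) hrp
  have hk1 : k * (r - p) = p - 1 := by rw [hk]; field_simp
  have hkp : k * r + 1 = (k + 1) * p := by linarith
  have hkneg : (p - 1) / (p - r) = -k := by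
    rw [hk, ← neg_sub r p, div_neg]
  have hsβ : s * p = (1 + α) * p - β := by rw [hs]; field_simp
  have hγ : γ * r = s + β := by rw [hbal, hs]; field_simp; ring
  rw [← hs] at hcond hf
  have hcond' : (n:ℝ) - β < s * (k * r + 1) := by
    have : s * p * (r - 1) / (r - p) = s * (k * r + 1) := by
      rw [hk]; field_simp; ring
    linarith
  have hs0 : 0 < s := by
    have : 0 < k * r + 1 := by positivity
    by_contra h
    nlinarith [not_lt.1 h]
  have ha : 0 < (n:ℝ) - (s + β) := by
    have : γ / n < 1 / r := by linarith
    rw [div_lt_div_iff₀ hn0 hr0] at this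
    linarith
  have ham : (n:ℝ) - (s + β) < s * (k * r) := by linarith
  have hm : 0 < k * r := by positivity
  rw [hkneg] at hf
  have hfp : ∀ x : EuclideanSpace ℝ (Fin n), 0 < lam + ‖x‖ ^ s := fun x => by positivity
  have hexp : p * (r - 1) / (p - 1) * k = k * r + 1 := by
    rw [hkp, hk]
    have : p - 1 ≠ 0 := by linarith
    field_simp; ring
  have eA : (fun x : EuclideanSpace ℝ (Fin n) => |f x| ^ r * ‖x‖ ^ (-(γ * r))) =
      fun x => (fun y : ℝ => (lam + y ^ s) ^ (-(k * r)) * y ^ (-(s + β))) ‖x‖ := by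
    funext x
    have := hfp x
    simp only [hf]
    rw [abs_of_pos (by positivity), ← rpow_mul this.le, hγ]
    congr 2; ring
  have eB : (fun x : EuclideanSpace ℝ (Fin n) => |f x| ^ (p * (r-1)/(p-1)) * ‖x‖ ^ (-β)) =
      fun x => (fun y : ℝ => (lam + y ^ s) ^ (-(k * r + 1)) * y ^ (-β)) ‖x‖ := by
    funext x
    have := hfp x
    simp only [hf]
    rw [abs_of_pos (by positivity), ← rpow_mul this.le, ← hexp]
    congr 2; ring
  have : Nontrivial (EuclideanSpace ℝ (Fin n)) := by
    have : Nonempty (Fin n) := ⟨⟨0, by omega⟩⟩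
    infer_instance
  have iA : Integrable (fun x : EuclideanSpace ℝ (Fin n) => |f x| ^ r * ‖x‖ ^ (-(γ * r))) := by
    rw [eA, integrable_fun_norm_addHaar volume
      (f := fun y : ℝ => (lam + y ^ s) ^ (-(k * r)) * y ^ (-(s + β))),
      integrableOn_congr_fun (ckn_aux_radial n hn lam s (k * r) (s + β)) measurableSet_Ioi]
    exact ckn_aux_int lam s _ _ hlam hs0 hm ha ham
  have iB : Integrable (fun x : EuclideanSpace ℝ (Fin n) =>
      |f x| ^ (p * (r-1)/(p-1)) * ‖x‖ ^ (-β)) := by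
    rw [eB, integrable_fun_norm_addHaar volume
      (f := fun y : ℝ => (lam + y ^ s) ^ (-(k * r + 1)) * y ^ (-β)),
      integrableOn_congr_fun (ckn_aux_radial n hn lam s (k * r + 1) β) measurableSet_Ioi]
    exact ckn_aux_int lam s _ _ hlam hs0 (by linarith) hnb hcond'
  have eG : (fun x : EuclideanSpace ℝ (Fin n) => ‖gradient f x‖ ^ p * ‖x‖ ^ (-(α * p))) =ᵐ[volume]
      fun x => (k * s) ^ p * (|f x| ^ (p * (r-1)/(p-1)) * ‖x‖ ^ (-β)) := by
    have h0 : ∀ᵐ x : EuclideanSpace ℝ (Fin n), x ≠ 0 := by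
      simp [ae_iff]
    filter_upwards [h0] with x hx
    rw [congrFun eB x, hf, ckn_aux_grad n hn lam s k hlam hs0 hk0 x hx]
    have hx0 : 0 < ‖x‖ := norm_pos_iff.2 hx
    have := hfp x
    rw [mul_rpow (by positivity) (by positivity), mul_rpow (by positivity) (by positivity),
      ← rpow_mul hx0.le, ← rpow_mul this.le, hkp]
    have e : ‖x‖ ^ (-β) = ‖x‖ ^ ((s - 1) * p) * ‖x‖ ^ (-(α * p)) := by
      rw [← rpow_add hx0]; congr 1; linarith
    simp only [e]
    rw [neg_mul]; ring
  have iG := (integrable_congr eG).2 (iB.const_mul _)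
  refine ⟨?_, iA, iG, iB⟩
  have key : ((n:ℝ) - (s + β)) * ∫ x : EuclideanSpace ℝ (Fin n), |f x| ^ r * ‖x‖ ^ (-(γ * r)) =
      k * r * s * ∫ x : EuclideanSpace ℝ (Fin n),
        |f x| ^ (p * (r-1)/(p-1)) * ‖x‖ ^ (-β) := by
    rw [eA, eB, integral_fun_norm_addHaar volume
      (f := fun y : ℝ => (lam + y ^ s) ^ (-(k * r)) * y ^ (-(s + β))),
      integral_fun_norm_addHaar volume
      (f := fun y : ℝ => (lam + y ^ s) ^ (-(k * r + 1)) * y ^ (-β)),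
      setIntegral_congr_fun measurableSet_Ioi (ckn_aux_radial n hn lam s (k * r) (s + β)),
      setIntegral_congr_fun measurableSet_Ioi (ckn_aux_radial n hn lam s (k * r + 1) β)]
    have h := ckn_aux_ibp lam s _ _ hlam hs0 hm ha ham
    rw [show (n:ℝ) - (s + β) + s - 1 = n - β - 1 by ring] at h
    rw [mul_smul_comm, mul_smul_comm, mul_smul_comm, mul_smul_comm, h]
  rw [integral_congr_ae eG, integral_const_mul]
  have hJ : 0 ≤ ∫ x : EuclideanSpace ℝ (Fin n), |f x| ^ (p * (r-1)/(p-1)) * ‖x‖ ^ (-β) :=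
    integral_nonneg fun x => by positivity
  generalize (∫ x : EuclideanSpace ℝ (Fin n), |f x| ^ (p * (r-1)/(p-1)) * ‖x‖ ^ (-β)) = J at *
  rw [mul_rpow (by positivity) hJ, ← rpow_mul (by positivity), mul_one_div_cancel hp0.ne', rpow_one]
  have hJJ : J ^ (1 / p) * J ^ ((p - 1) / p) = J := by
    rw [← rpow_add_of_nonneg hJ (by positivity) (div_nonneg (by linarith) hp0.le),
      ← add_div, add_sub_cancel, div_self hp0.ne', rpow_one]
  rw [hγ] at key ⊢
  rw [show r / (↑n - (s + β)) * (k * s * J ^ (1 / p)) * J ^ ((p - 1) / p) =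
    r / (↑n - (s + β)) * (k * s * (J ^ (1 / p) * J ^ ((p - 1) / p))) by ring, hJJ, div_mul_eq_mul_div,
    eq_div_iff ha.ne', mul_comm, key]
  ring
end

section
/- Let n ≥ 1, p > 1, δ < n − p. Then for every smooth compactly supported function f : ℝ^n → ℝ, ∫_{ℝ^n} |f(x)|^p |x|^{−p−δ} dx ≤ (p/(n−p−δ))^p ∫_{ℝ^n} |∇f(x)|^p |x|^{−δ} dx (the weighted Hardy inequality). -/
open Real MeasureTheory

section HardyAux

open Topology Filter

/-- `‖x‖ ^ s` times a continuous compactly supported function is integrable if `s > -n`. -/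
lemma hardy_integrable (n : ℕ) (hn : 1 ≤ n) (s : ℝ) (hs : -(n : ℝ) < s)
    (h : EuclideanSpace ℝ (Fin n) → ℝ) (hc : Continuous h) (hk : HasCompactSupport h) :
    Integrable (fun x : EuclideanSpace ℝ (Fin n) => h x * ‖x‖ ^ s) := by
  have hl : LocallyIntegrable (fun x : EuclideanSpace ℝ (Fin n) => ‖x‖ ^ s) := by
    refine locallyIntegrable_of_norm_le_rpow (C := 1) (α := -s) (by simpa using hn)
      (by simp; linarith) ?_ ?_
    · refine Eventually.of_forall fun x => ?_
      rw [Real.norm_of_nonneg (by positivity)]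
      simp
    · exact (measurable_norm.pow_const s).aestronglyMeasurable
  simpa [smul_eq_mul] using hl.integrable_smul_left_of_hasCompactSupport hc hk

/-- Integration of the radial derivative against a power weight. -/
lemma hardy_euler (n : ℕ) (hn : 1 ≤ n) (s : ℝ) (hs : -(n : ℝ) < s)
    (g : EuclideanSpace ℝ (Fin n) → ℝ) (hg : ContDiff ℝ 1 g) (hk : HasCompactSupport g) :
    Integrable (fun x : EuclideanSpace ℝ (Fin n) => fderiv ℝ g x x * ‖x‖ ^ s) ∧
    ∫ x : EuclideanSpace ℝ (Fin n), fderiv ℝ g x x * ‖x‖ ^ s =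
      -(n + s) * ∫ x : EuclideanSpace ℝ (Fin n), g x * ‖x‖ ^ s := by
  have hdc : Continuous (fun x => fderiv ℝ g x) := hg.continuous_fderiv (by norm_num)
  have hGc : Continuous (fun x => fderiv ℝ g x x) := hdc.clm_apply continuous_id
  have hdk : HasCompactSupport (fun x => fderiv ℝ g x) := hk.fderiv ℝ
  have hGk : HasCompactSupport (fun x => fderiv ℝ g x x) :=
    hdk.mono (fun x hx => by
      simp only [Function.mem_support] at hx ⊢
      intro h0; apply hx; rw [h0]; simp)
  refine ⟨hardy_integrable n hn s hs _ hGc hGk, ?_⟩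
  obtain ⟨C, hC⟩ := hdc.bounded_above_of_compact_support hdk
  obtain ⟨R, hR0, hR⟩ := hdk.isCompact.isBounded.exists_pos_norm_lt
  -- a continuous compactly supported majorant
  let χ : ContDiffBump (0 : EuclideanSpace ℝ (Fin n)) :=
    ⟨2 * R, 3 * R, by positivity, by linarith⟩
  have hm : Integrable (fun x : EuclideanSpace ℝ (Fin n) => (C * ‖x‖ * χ x) * ‖x‖ ^ s) := by
    refine hardy_integrable n hn s hs _ ?_ ?_
    · exact (continuous_const.mul continuous_norm).mul χ.continuous
    · exact χ.hasCompactSupport.mul_left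
  have hC0 : 0 ≤ C := (norm_nonneg _).trans (hC 0)
  have key := hasDerivAt_integral_of_dominated_loc_of_deriv_le
    (μ := (volume : Measure (EuclideanSpace ℝ (Fin n)))) (𝕜 := ℝ)
    (F := fun (t : ℝ) x => g (t • x) * ‖x‖ ^ s)
    (F' := fun (t : ℝ) x => fderiv ℝ g (t • x) x * ‖x‖ ^ s)
    (x₀ := (1 : ℝ)) (s := Set.Ioo (1/2) 2)
    (bound := fun x => (C * ‖x‖ * χ x) * ‖x‖ ^ s)
    (Ioo_mem_nhds (by norm_num) (by norm_num))
    (Eventually.of_forall fun t => by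
      have : Measurable (fun x => g (t • x)) :=
        (hg.continuous.comp (continuous_const_smul t)).measurable
      exact (this.mul (measurable_norm.pow_const s)).aestronglyMeasurable)
    (by simpa using hardy_integrable n hn s hs g hg.continuous hk)
    (by simpa using (hardy_integrable n hn s hs _ hGc hGk).aestronglyMeasurable)
    (Eventually.of_forall fun x t ht => by
      rw [norm_mul, Real.norm_of_nonneg (by positivity : (0 : ℝ) ≤ ‖x‖ ^ s)]
      gcongr
      by_cases h0 : t • x ∈ tsupport (fun x => fderiv ℝ g x)
      · have h1 := hR _ h0
        rw [norm_smul, Real.norm_of_nonneg (by linarith [ht.1])] at h1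
        have h2 : ‖x‖ ≤ 2 * R := by nlinarith [ht.1, norm_nonneg x]
        have h3 : χ x = 1 := χ.one_of_mem_closedBall (by simpa using h2)
        rw [h3, mul_one]
        exact (fderiv ℝ g (t • x)).le_of_opNorm_le (hC _) x
      · have h1 : fderiv ℝ g (t • x) = 0 := image_eq_zero_of_notMem_tsupport h0
        rw [h1]
        simp only [ContinuousLinearMap.zero_apply, norm_zero]
        have := χ.nonneg (x := x)
        positivity)
    hm
    (Eventually.of_forall fun x t _ => by
      have h1 : HasDerivAt (fun t : ℝ => t • x) x t := by
        simpa using (hasDerivAt_id t).smul_const x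
      have h2 : HasFDerivAt g (fderiv ℝ g (t • x)) (t • x) :=
        (hg.differentiable (by norm_num) _).hasFDerivAt
      exact (h2.comp_hasDerivAt t h1).mul_const _)
  have h1 := key.2
  simp only [one_smul] at h1
  set A := ∫ x : EuclideanSpace ℝ (Fin n), g x * ‖x‖ ^ s with hA
  have h2 : HasDerivAt (fun t : ℝ => t ^ (-(n + s)) * A) (-(n + s) * A) 1 := by
    simpa using (Real.hasDerivAt_rpow_const (x := 1) (p := -(n + s))
      (Or.inl one_ne_zero)).mul_const A
  refine h1.unique (h2.congr_of_eventuallyEq ?_)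
  filter_upwards [Ioi_mem_nhds (zero_lt_one : (0 : ℝ) < 1)] with t ht
  have ht : 0 < t := ht
  have h3 := Measure.integral_comp_smul (volume : Measure (EuclideanSpace ℝ (Fin n)))
    (fun x => g x * ‖x‖ ^ s) t
  rw [← hA] at h3
  have h4 : ∀ x : EuclideanSpace ℝ (Fin n),
      g (t • x) * ‖x‖ ^ s = t ^ (-s) * (g (t • x) * ‖t • x‖ ^ s) := by
    intro x
    rw [norm_smul, Real.norm_of_nonneg ht.le, Real.mul_rpow ht.le (norm_nonneg _),
      Real.rpow_neg ht.le]
    have := (Real.rpow_pos_of_pos ht s).ne'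
    field_simp
  simp_rw [h4]
  rw [integral_const_mul, h3, finrank_euclideanSpace_fin, abs_of_nonneg (by positivity),
    smul_eq_mul, ← mul_assoc, neg_add, Real.rpow_add ht, Real.rpow_neg ht.le n, Real.rpow_natCast]
  ring

end HardyAux

/-- Weighted Hardy inequality on ℝⁿ with sharp constant `(p/(n−p−δ))^p`. -/
theorem weighted_hardy
    (n : ℕ) (hn : 1 ≤ n) (p δ : ℝ) (hp : 1 < p) (hδ : δ < n - p)
    (f : EuclideanSpace ℝ (Fin n) → ℝ) (hf : ContDiff ℝ (⊤ : ℕ∞) f)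
    (hsupp : HasCompactSupport f) :
    ∫ x : EuclideanSpace ℝ (Fin n), |f x| ^ p * ‖x‖ ^ (-p - δ) ≤
      (p / (n - p - δ)) ^ p *
        ∫ x : EuclideanSpace ℝ (Fin n), ‖gradient f x‖ ^ p * ‖x‖ ^ (-δ) := by
  have hp0 : 0 < p := by linarith
  have hgrad : ∀ x, ‖gradient f x‖ = ‖fderiv ℝ f x‖ := fun x => by
    rw [← toDual_gradient, LinearIsometryEquiv.norm_map]
  simp_rw [hgrad]
  have hf1 : ContDiff ℝ 1 f := hf.of_le (by exact_mod_cast le_top)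
  have hfd : Differentiable ℝ f := hf1.differentiable (by norm_num)
  have hg : ContDiff ℝ 1 (fun x => ‖f x‖ ^ p) := (contDiff_norm_rpow hp).comp hf1
  have hgk : HasCompactSupport (fun x => ‖f x‖ ^ p) :=
    hsupp.comp_left (g := fun y : ℝ => ‖y‖ ^ p) (by simp [hp0.ne'])
  obtain ⟨hI1, hE⟩ := hardy_euler n hn (-p - δ) (by linarith) _ hg hgk
  have hI2 := hardy_integrable n hn (-p - δ) (by linarith) _ hg.continuous hgk
  have hI3 : Integrable (fun x : EuclideanSpace ℝ (Fin n) =>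
      ‖fderiv ℝ f x‖ ^ p * ‖x‖ ^ (-δ)) := by
    refine hardy_integrable n hn (-δ) (by linarith) _ ?_ ?_
    · exact (hf1.continuous_fderiv (by norm_num)).norm.rpow_const fun _ => Or.inr hp0.le
    · exact (hsupp.fderiv ℝ).comp_left (g := fun y => ‖y‖ ^ p) (by simp [hp0.ne'])
  simp_rw [← Real.norm_eq_abs]
  set A := ∫ x : EuclideanSpace ℝ (Fin n), ‖f x‖ ^ p * ‖x‖ ^ (-p - δ) with hA
  set B := ∫ x : EuclideanSpace ℝ (Fin n), ‖fderiv ℝ f x‖ ^ p * ‖x‖ ^ (-δ) with hB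
  set c := (n - p - δ) / p with hc
  have hc0 : 0 < c := div_pos (by linarith) hp0
  let q := p / (p - 1)
  have hpq : p.HolderConjugate q := Real.HolderConjugate.conjExponent hp
  have hq0 : 0 < q := hpq.symm.pos
  have hpt : ∀ x : EuclideanSpace ℝ (Fin n), x ≠ 0 →
      -(fderiv ℝ (fun x => ‖f x‖ ^ p) x x * ‖x‖ ^ (-p - δ)) ≤
      (p * c / q) * (‖f x‖ ^ p * ‖x‖ ^ (-p - δ)) +
        (c * c ^ (-p)) * (‖fderiv ℝ f x‖ ^ p * ‖x‖ ^ (-δ)) := by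
    intro x hx
    have hx0 : 0 < ‖x‖ := norm_pos_iff.mpr hx
    set r := ‖x‖
    set a := ‖f x‖ with ha
    set v := ‖fderiv ℝ f x‖ with hv
    have ha0 : 0 ≤ a := norm_nonneg _
    have hv0 : 0 ≤ v := norm_nonneg _
    have h1 : -(fderiv ℝ (fun x => ‖f x‖ ^ p) x x) ≤ p * a ^ (p - 1) * v * r := by
      refine (neg_le_abs _).trans ?_
      rw [← Real.norm_eq_abs]
      exact (ContinuousLinearMap.le_opNorm _ _).trans
        (mul_le_mul_of_nonneg_right (norm_fderiv_norm_rpow_le hfd hp) hx0.le)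
    have hY := Real.young_inequality_of_nonneg (a := v * r / c) (b := a ^ (p - 1))
      (by positivity) (by positivity) hpq
    have e1 : (a ^ (p - 1)) ^ q = a ^ p := by
      rw [← Real.rpow_mul ha0]
      congr 1
      have : p - 1 ≠ 0 := by linarith
      simp only [q]; field_simp
    have e2 : (v * r / c) ^ p = c ^ (-p) * v ^ p * r ^ p := by
      rw [Real.div_rpow (by positivity) hc0.le, Real.mul_rpow hv0 hx0.le, Real.rpow_neg hc0.le]
      ring
    have e3 : r ^ p * r ^ (-p - δ) = r ^ (-δ) := by
      rw [← Real.rpow_add hx0]; ring_nf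
    rw [e1, e2] at hY
    have h2 : p * a ^ (p - 1) * v * r ≤
        p * c * (c ^ (-p) * v ^ p * r ^ p / p + a ^ p / q) := by
      calc _ = p * c * (v * r / c * a ^ (p - 1)) := by field_simp
        _ ≤ _ := by gcongr
    have hw : 0 ≤ r ^ (-p - δ) := by positivity
    calc _ = -(fderiv ℝ (fun x => ‖f x‖ ^ p) x x) * r ^ (-p - δ) := by ring
      _ ≤ (p * c * (c ^ (-p) * v ^ p * r ^ p / p + a ^ p / q)) * r ^ (-p - δ) :=
        mul_le_mul_of_nonneg_right (h1.trans h2) hw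
      _ = _ := by
        rw [← e3]; field_simp; ring
  have hne : ∀ᵐ x : EuclideanSpace ℝ (Fin n), x ≠ 0 := by
    haveI : Nonempty (Fin n) := ⟨⟨0, hn⟩⟩
    exact Measure.ae_ne volume 0
  have hle := integral_mono_ae hI1.neg ((hI2.const_mul (p * c / q)).add
    (hI3.const_mul (c * c ^ (-p)))) (by
      filter_upwards [hne] with x hx using hpt x hx)
  simp only [Pi.neg_apply, Pi.add_apply] at hle
  rw [integral_neg, hE, integral_add (hI2.const_mul _) (hI3.const_mul _), integral_const_mul,
    integral_const_mul, ← hA, ← hB] at hle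
  have e4 : (n : ℝ) + (-p - δ) = p * c := by rw [hc]; field_simp; ring
  have e5 : p * c / q = p * c - c := by
    simp only [q]; field_simp
  rw [e4, e5] at hle
  have h5 : c * A ≤ c * (c ^ (-p) * B) := by nlinarith
  have h6 := le_of_mul_le_mul_left h5 hc0
  have e6 : (p / (n - p - δ)) ^ p = c ^ (-p) := by
    rw [Real.rpow_neg hc0.le, ← Real.inv_rpow hc0.le, hc, inv_div]
  rw [e6]
  exact h6
end
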